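/- Fix an odd prime p. There are constants c_p > 0 and r₀(p) < ∞ such that, for every h = 2m ≥ 2 and every r ≥ max{h+1, r₀(p)}, the half-lazy PA-PRA walk on V_r(H) satisfies τ_mix ≥ c_p·max{ r·log r , r·(h+1)/log(e·r) }. -/

import Mathlib

noncomputable section

/-- Data of a bilinear form on `W` turning `W × ZMod p` into a Heisenberg group. -/
class HeisData (p : ℕ) (W : Type*) [Fact (Nat.Prime p)] [AddCommGroup W]
    [Module (ZMod p) W] where
  ω : W →ₗ[ZMod p] W →ₗ[ZMod p] ZMod p

/-- The Heisenberg group structure on `W × ZMod p`: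
`(v,z)·(w,t) = (v+w, z+t+ω(v,w)/2)`. -/
instance heisGroup (p : ℕ) (W : Type*) [Fact (Nat.Prime p)] [AddCommGroup W]
    [Module (ZMod p) W] [HeisData p W] : Group (W × ZMod p) where
  mul x y := (x.1 + y.1, x.2 + y.2 + (2 : ZMod p)⁻¹ * HeisData.ω x.1 y.1)
  one := ((0 : W), (0 : ZMod p))
  inv x := (-x.1, -x.2 + (2 : ZMod p)⁻¹ * HeisData.ω x.1 x.1)
  mul_assoc a b c := by
    refine Prod.ext ?_ ?_
    · show a.1 + b.1 + c.1 = a.1 + (b.1 + c.1)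
      exact add_assoc _ _ _
    · show a.2 + b.2 + (2 : ZMod p)⁻¹ * HeisData.ω a.1 b.1 + c.2 +
          (2 : ZMod p)⁻¹ * HeisData.ω (a.1 + b.1) c.1 =
        a.2 + (b.2 + c.2 + (2 : ZMod p)⁻¹ * HeisData.ω b.1 c.1) +
          (2 : ZMod p)⁻¹ * HeisData.ω a.1 (b.1 + c.1)
      simp only [map_add, LinearMap.add_apply]
      ring
  one_mul a := by
    refine Prod.ext ?_ ?_
    · show 0 + a.1 = a.1; simp
    · show 0 + a.2 + (2 : ZMod p)⁻¹ * HeisData.ω 0 a.1 = a.2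
      simp
  mul_one a := by
    refine Prod.ext ?_ ?_
    · show a.1 + 0 = a.1; simp
    · show a.2 + 0 + (2 : ZMod p)⁻¹ * HeisData.ω a.1 0 = a.2
      simp
  inv_mul_cancel a := by
    refine Prod.ext ?_ ?_
    · show -a.1 + a.1 = 0; simp
    · show -a.2 + (2 : ZMod p)⁻¹ * HeisData.ω a.1 a.1 + a.2 +
          (2 : ZMod p)⁻¹ * HeisData.ω (-a.1) a.1 = 0
      simp only [map_neg, LinearMap.neg_apply]
      ring

open Finset

/-- Total variation distance between two densities on a finite set. -/
def tvDist {X : Type*} [Fintype X] (f g : X → ℝ) : ℝ := (1 / 2) * ∑ x, |f x - g x|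

open Classical in
/-- The uniform probability density on a subset of a finite set. -/
def unifOn {X : Type*} [Fintype X] (G : Set X) : X → ℝ :=
  fun x => if x ∈ G then (Nat.card G : ℝ)⁻¹ else 0

/-- Mixing time: the first time all rows started in `start` are within 1/4 of `π`. -/
def mixTime {X : Type*} [Fintype X] [DecidableEq X] (Q : Matrix X X ℝ) (π : X → ℝ)
    (start : Set X) : ℕ :=
  sInf {t : ℕ | ∀ x ∈ start, tvDist ((Q ^ t) x) π ≤ 1 / 4}

/-- Tuples generating the whole group. -/
def genSet (r : ℕ) (H : Type*) [Group H] : Set (Fin r → H) :=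
  {g | Subgroup.closure (Set.range g) = ⊤}

/-- The PA-PRA kernel on `H^r`. -/
def paP (p : ℕ) [Fact (Nat.Prime p)] (r : ℕ) (H : Type*) [Group H] [Fintype H]
    [DecidableEq H] : Matrix (Fin r → H) (Fin r → H) ℝ :=
  fun g g' => (∑ i : Fin r, ∑ j : Fin r, ∑ a : ZMod p,
    ((if i ≠ j ∧ g' = Function.update g i (g i * (g j) ^ (a.val)) then (1 : ℝ) else 0) +
     (if i ≠ j ∧ g' = Function.update g i ((g j) ^ (a.val) * g i) then (1 : ℝ) else 0)))
    / (2 * (p : ℝ) * r * ((r : ℝ) - 1))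

/-- The half-lazy PA-PRA kernel. -/
def paQ (p : ℕ) [Fact (Nat.Prime p)] (r : ℕ) (H : Type*) [Group H] [Fintype H]
    [DecidableEq H] : Matrix (Fin r → H) (Fin r → H) ℝ :=
  (2⁻¹ : ℝ) • ((1 : Matrix (Fin r → H) (Fin r → H) ℝ) + paP p r H)

/-! generic Markov chain facts -/

def GoodM {X : Type*} [Fintype X] (Ω : Set X) (Q : Matrix X X ℝ) : Prop :=
  (∀ x y, 0 ≤ Q x y) ∧ (∀ x, ∑ y, Q x y = 1) ∧ (∀ y, ∑ x, Q x y = 1) ∧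
  (∀ x ∈ Ω, ∀ y, y ∉ Ω → Q x y = 0) ∧ (∀ x, x ∉ Ω → ∀ y ∈ Ω, Q x y = 0)

theorem GoodM.one {X : Type*} [Fintype X] [DecidableEq X] (Ω : Set X) :
    GoodM Ω (1 : Matrix X X ℝ) := by
  refine ⟨fun x y => ?_, fun x => ?_, fun y => ?_, fun x hx y hy => ?_, fun x hx y hy => ?_⟩
  · rw [Matrix.one_apply]; split_ifs <;> norm_num
  · simp [Matrix.one_apply]
  · simp [Matrix.one_apply]
  · rw [Matrix.one_apply, if_neg]; rintro rfl; exact hy hx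
  · rw [Matrix.one_apply, if_neg]; rintro rfl; exact hx hy

theorem GoodM.mul {X : Type*} [Fintype X] [DecidableEq X] {Ω : Set X}
    {A B : Matrix X X ℝ} (hA : GoodM Ω A) (hB : GoodM Ω B) : GoodM Ω (A * B) := by
  obtain ⟨a1, a2, a3, a4, a5⟩ := hA
  obtain ⟨b1, b2, b3, b4, b5⟩ := hB
  refine ⟨fun x y => ?_, fun x => ?_, fun y => ?_, fun x hx y hy => ?_, fun x hx y hy => ?_⟩
  · rw [Matrix.mul_apply]; exact Finset.sum_nonneg fun z _ => mul_nonneg (a1 _ _) (b1 _ _)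
  · simp only [Matrix.mul_apply]
    rw [Finset.sum_comm]
    simp [← Finset.mul_sum, b2, a2]
  · simp only [Matrix.mul_apply]
    rw [Finset.sum_comm]
    simp [← Finset.sum_mul, a3, b3]
  · rw [Matrix.mul_apply]
    refine Finset.sum_eq_zero fun z _ => ?_
    by_cases hz : z ∈ Ω
    · rw [b4 z hz y hy, mul_zero]
    · rw [a4 x hx z hz, zero_mul]
  · rw [Matrix.mul_apply]
    refine Finset.sum_eq_zero fun z _ => ?_
    by_cases hz : z ∈ Ω
    · rw [a5 x hx z hz, zero_mul]
    · rw [b5 z hz y hy, mul_zero]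

theorem GoodM.pow {X : Type*} [Fintype X] [DecidableEq X] {Ω : Set X}
    {A : Matrix X X ℝ} (hA : GoodM Ω A) (n : ℕ) : GoodM Ω (A ^ n) := by
  induction n with
  | zero => rw [pow_zero]; exact GoodM.one Ω
  | succ n ih => rw [pow_succ]; exact ih.mul hA

theorem unifOn_sum {X : Type*} [Fintype X] (Ω : Set X) (hne : Ω.Nonempty) :
    ∑ x, unifOn Ω x = 1 := by
  classical
  unfold unifOn
  have hc : (Finset.univ.filter (· ∈ Ω)).card = Nat.card Ω := by
    rw [Nat.card_eq_fintype_card, Fintype.card_subtype]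
  rw [← Finset.sum_filter, Finset.sum_const, hc, nsmul_eq_mul, mul_inv_cancel₀]
  have : Nonempty Ω := hne.to_subtype
  exact_mod_cast Nat.card_pos.ne'

theorem unifOn_inv {X : Type*} [Fintype X] {Ω : Set X} {A : Matrix X X ℝ}
    (hA : GoodM Ω A) (y : X) : ∑ x, unifOn Ω x * A x y = unifOn Ω y := by
  classical
  obtain ⟨a1, a2, a3, a4, a5⟩ := hA
  have : ∀ x, unifOn Ω x * A x y = unifOn Ω y * A x y := by
    intro x
    unfold unifOn
    by_cases hx : x ∈ Ω <;> by_cases hy : y ∈ Ω <;> simp [hx, hy, a4, a5]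

  simp_rw [this, ← Finset.mul_sum, a3, mul_one]

theorem contract {X : Type*} [Fintype X] {Ω : Set X} {A : Matrix X X ℝ}
    (hA : GoodM Ω A) {ε : ℝ} (hε : ∀ x ∈ Ω, ∀ y ∈ Ω, ε ≤ A x y) (μ : X → ℝ)
    (h0 : ∀ x, x ∉ Ω → μ x = 0) (hs : ∑ x, μ x = 0) :
    ∑ y, |∑ x, μ x * A x y| ≤ (1 - ε * Nat.card Ω) * ∑ x, |μ x| := by
  classical
  obtain ⟨a1, a2, a3, a4, a5⟩ := hA
  have hc : (Finset.univ.filter (· ∈ Ω)).card = Nat.card Ω := by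
    rw [Nat.card_eq_fintype_card, Fintype.card_subtype]
  have key : ∀ y, |∑ x, μ x * A x y| ≤ ∑ x, |μ x| * (A x y - if y ∈ Ω then ε else 0) := by
    intro y
    have h1 : ∑ x, μ x * A x y = ∑ x, μ x * (A x y - if y ∈ Ω then ε else 0) := by
      simp_rw [mul_sub, Finset.sum_sub_distrib, ← Finset.sum_mul, hs]; simp
    rw [h1]
    refine (Finset.abs_sum_le_sum_abs _ _).trans (Finset.sum_le_sum fun x _ => ?_)
    rw [abs_mul]
    by_cases hx : x ∈ Ω
    · rw [abs_of_nonneg (a := A x y - _)]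
      split_ifs with hy
      · linarith [hε x hx y hy]
      · linarith [a1 x y]
    · simp [h0 x hx]
  refine (Finset.sum_le_sum fun y _ => key y).trans ?_
  rw [Finset.sum_comm, Finset.mul_sum]
  refine Finset.sum_le_sum fun x _ => le_of_eq ?_
  rw [← Finset.mul_sum, Finset.sum_sub_distrib, a2, ← Finset.sum_filter, Finset.sum_const, hc,
    nsmul_eq_mul]
  ring

theorem conv_of_pos {X : Type*} [Fintype X] [DecidableEq X] {Ω : Set X} {A : Matrix X X ℝ}
    (hA : GoodM Ω A) (hne : Ω.Nonempty) {ε : ℝ} (hpos : 0 < ε)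
    (hε : ∀ x ∈ Ω, ∀ y ∈ Ω, ε ≤ A x y) :
    ∃ k : ℕ, ∀ x ∈ Ω, tvDist ((A ^ k) x) (unifOn Ω) ≤ 1 / 4 := by
  classical
  set q : ℝ := 1 - ε * Nat.card Ω with hq
  have hcard : (0:ℝ) < Nat.card Ω := by
    have : Nonempty Ω := hne.to_subtype
    exact_mod_cast Nat.card_pos
  have hq1 : q < 1 := by have := mul_pos hpos hcard; linarith
  have hq0 : 0 ≤ q := by
    obtain ⟨x, hx⟩ := hne
    have hc : (Finset.univ.filter (· ∈ Ω)).card = Nat.card Ω := by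
      rw [Nat.card_eq_fintype_card, Fintype.card_subtype]
    have h1 : ∑ y, (if y ∈ Ω then ε else 0) ≤ ∑ y, A x y := by
      refine Finset.sum_le_sum fun y _ => ?_
      split_ifs with hy
      · exact hε x hx y hy
      · exact hA.1 x y
    rw [hA.2.1, ← Finset.sum_filter, Finset.sum_const, hc, nsmul_eq_mul] at h1
    linarith
  have main : ∀ x ∈ Ω, ∀ k : ℕ, ∑ y, |(A ^ k) x y - unifOn Ω y| ≤ q ^ k * 2 := by
    intro x hx k
    induction k with
    | zero =>
      have h1 : ∀ y, |((A ^ 0) x y) - unifOn Ω y| ≤ (A ^ 0) x y + unifOn Ω y := by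
        intro y
        have := (hA.pow 0).1 x y
        have h2 : 0 ≤ unifOn Ω y := by unfold unifOn; split_ifs <;> positivity
        rw [abs_le]; constructor <;> linarith
      refine (Finset.sum_le_sum fun y _ => h1 y).trans ?_
      rw [Finset.sum_add_distrib, (hA.pow 0).2.1, unifOn_sum Ω hne]; norm_num
    | succ k ih =>
      have h1 : ∀ y, (A ^ (k+1)) x y - unifOn Ω y =
          ∑ z, ((A ^ k) x z - unifOn Ω z) * A z y := by
        intro y
        simp_rw [sub_mul, Finset.sum_sub_distrib, unifOn_inv hA y, pow_succ, Matrix.mul_apply]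
      simp_rw [h1]
      refine (contract hA hε (fun z => (A ^ k) x z - unifOn Ω z) ?_ ?_).trans ?_
      · intro z hz
        simp only [(hA.pow k).2.2.2.1 x hx z hz, unifOn, if_neg hz, sub_zero]
      · rw [Finset.sum_sub_distrib, (hA.pow k).2.1, unifOn_sum Ω hne, sub_self]
      · rw [pow_succ']
        calc _ ≤ q * (q ^ k * 2) := mul_le_mul_of_nonneg_left ih hq0
          _ = _ := by ring
  obtain ⟨k, hk⟩ := exists_pow_lt_of_lt_one (show (0:ℝ) < 1/4 by norm_num) hq1
  refine ⟨k, fun x hx => ?_⟩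
  unfold tvDist
  have := main x hx k
  linarith

theorem exists_mix {X : Type*} [Fintype X] [DecidableEq X] {Ω : Set X} {Q : Matrix X X ℝ}
    (hQ : GoodM Ω Q) (hne : Ω.Nonempty) (hd : ∀ x, 0 < Q x x)
    (hirr : ∀ x ∈ Ω, ∀ y ∈ Ω, Relation.ReflTransGen (fun a b => 0 < Q a b) x y) :
    ∃ t : ℕ, ∀ x ∈ Ω, tvDist ((Q ^ t) x) (unifOn Ω) ≤ 1 / 4 := by
  classical
  have step : ∀ (n : ℕ) x y z, 0 < (Q ^ n) x y → 0 < Q y z → 0 < (Q ^ (n+1)) x z := by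
    intro n x y z h1 h2
    rw [pow_succ, Matrix.mul_apply]
    refine lt_of_lt_of_le (mul_pos h1 h2) ?_
    exact Finset.single_le_sum (f := fun w => (Q ^ n) x w * Q w z)
      (fun w _ => mul_nonneg ((hQ.pow n).1 _ _) (hQ.1 _ _)) (Finset.mem_univ y)
  have ex : ∀ x y, Relation.ReflTransGen (fun a b => 0 < Q a b) x y → ∃ n : ℕ, 0 < (Q ^ n) x y := by
    intro x y h
    induction h with
    | refl => exact ⟨0, by simp⟩
    | tail _ h ih => obtain ⟨n, hn⟩ := ih; exact ⟨n+1, step n _ _ _ hn h⟩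
  have mono : ∀ x y (n m : ℕ), n ≤ m → 0 < (Q ^ n) x y → 0 < (Q ^ m) x y := by
    intro x y n m h h0
    induction h with
    | refl => exact h0
    | step _ ih => exact step _ _ _ _ ih (hd y)
  have ex2 : ∀ a : X × X, ∃ n : ℕ, a.1 ∈ Ω → a.2 ∈ Ω → 0 < (Q ^ n) a.1 a.2 := by
    intro a
    by_cases h : a.1 ∈ Ω ∧ a.2 ∈ Ω
    · obtain ⟨n, hn⟩ := ex _ _ (hirr _ h.1 _ h.2)
      exact ⟨n, fun _ _ => hn⟩
    · exact ⟨0, fun h1 h2 => absurd ⟨h1, h2⟩ h⟩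
  choose n hn using ex2
  set N := Finset.univ.sup n with hN
  have hpos : ∀ x ∈ Ω, ∀ y ∈ Ω, 0 < (Q ^ N) x y := fun x hx y hy =>
    mono x y (n (x, y)) N (Finset.le_sup (f := n) (Finset.mem_univ (x, y))) (hn (x, y) hx hy)
  obtain ⟨x0, hx0⟩ := hne
  obtain ⟨a, ha, hmin⟩ := Finset.exists_min_image
    (Finset.univ.filter (fun a : X × X => a.1 ∈ Ω ∧ a.2 ∈ Ω)) (fun a => (Q ^ N) a.1 a.2)
    ⟨(x0, x0), by simp [hx0]⟩
  simp only [Finset.mem_filter, Finset.mem_univ, true_and] at ha hmin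
  obtain ⟨k, hk⟩ := conv_of_pos (hQ.pow N) ⟨x0, hx0⟩ (hpos _ ha.1 _ ha.2)
    (fun x hx y hy => hmin (x, y) ⟨hx, hy⟩)
  exact ⟨N * k, fun x hx => by rw [pow_mul]; exact hk x hx⟩

/-- support growth -/
theorem supp_card {X : Type*} [Fintype X] [DecidableEq X] {Q : Matrix X X ℝ} {M : ℕ}
    (hM : ∀ z, (Finset.univ.filter (fun y => Q z y ≠ 0)).card ≤ M) (x : X) (t : ℕ) :
    (Finset.univ.filter (fun y => (Q ^ t) x y ≠ 0)).card ≤ M ^ t := by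
  induction t with
  | zero =>
    have : (Finset.univ.filter (fun y => (Q ^ 0) x y ≠ 0)) ⊆ {x} := by
      intro y hy
      simp only [pow_zero, Finset.mem_filter, Finset.mem_univ, true_and, Matrix.one_apply] at hy
      simp only [Finset.mem_singleton]
      by_contra h
      exact hy (if_neg (fun h' => h h'.symm))
    simpa using Finset.card_le_card this
  | succ t ih =>
    have : (Finset.univ.filter (fun y => (Q ^ (t+1)) x y ≠ 0)) ⊆
        (Finset.univ.filter (fun y => (Q ^ t) x y ≠ 0)).biUnion
          (fun z => Finset.univ.filter (fun y => Q z y ≠ 0)) := by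
      intro y hy
      simp only [Finset.mem_filter, Finset.mem_univ, true_and, pow_succ, Matrix.mul_apply] at hy
      obtain ⟨z, _, hz⟩ := Finset.exists_ne_zero_of_sum_ne_zero hy
      simp only [Finset.mem_biUnion, Finset.mem_filter, Finset.mem_univ, true_and]
      exact ⟨z, left_ne_zero_of_mul hz, right_ne_zero_of_mul hz⟩
    refine (Finset.card_le_card this).trans (Finset.card_biUnion_le_card_mul _ _ M
      (fun z _ => hM z) |>.trans ?_)
    rw [pow_succ]
    exact Nat.mul_le_mul_right _ ih

/-- super-eigenfunction -/
theorem super_eig {X : Type*} [Fintype X] [DecidableEq X] {Q : Matrix X X ℝ} {f : X → ℝ} {l : ℝ}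
    (hQ : ∀ x y, 0 ≤ Q x y) (hl : 0 ≤ l) (hf : ∀ x, ∑ y, Q x y * f y ≤ l * f x) (x : X) (t : ℕ) :
    ∑ y, (Q ^ t) x y * f y ≤ l ^ t * f x := by
  induction t generalizing x with
  | zero => simp [Matrix.one_apply]
  | succ t ih =>
    have : ∑ y, (Q ^ (t+1)) x y * f y = ∑ z, Q x z * ∑ y, (Q ^ t) z y * f y := by
      simp_rw [pow_succ', Matrix.mul_apply, Finset.sum_mul, Finset.mul_sum]
      rw [Finset.sum_comm]
      simp_rw [mul_assoc]
    rw [this]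
    calc _ ≤ ∑ z, Q x z * (l ^ t * f z) :=
          Finset.sum_le_sum fun z _ => mul_le_mul_of_nonneg_left (ih z) (hQ _ _)
      _ = l ^ t * ∑ z, Q x z * f z := by
          rw [Finset.mul_sum]; exact Finset.sum_congr rfl fun z _ => by ring
      _ ≤ l ^ t * (l * f x) := mul_le_mul_of_nonneg_left (hf x) (pow_nonneg hl t)
      _ = _ := by ring

theorem tv_set {X : Type*} [Fintype X] (f g : X → ℝ) (A : Finset X) (h : tvDist f g ≤ 1 / 4) :
    ∑ x ∈ A, g x - ∑ x ∈ A, f x ≤ 1 / 2 := by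
  unfold tvDist at h
  rw [← Finset.sum_sub_distrib]
  calc _ ≤ ∑ x ∈ A, |f x - g x| := Finset.sum_le_sum fun x _ => by
          rw [abs_sub_comm]; exact le_abs_self _
    _ ≤ ∑ x, |f x - g x| := Finset.sum_le_sum_of_subset_of_nonneg (Finset.subset_univ _)
          (fun _ _ _ => abs_nonneg _)
    _ ≤ _ := by linarith
/-! kernel facts -/

theorem paP_sum (p : ℕ) [Fact (Nat.Prime p)] (r : ℕ) (H : Type*) [Group H] [Fintype H]
    [DecidableEq H] (g : Fin r → H) (f : (Fin r → H) → ℝ) :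
    ∑ g', paP p r H g g' * f g' = (∑ i : Fin r, ∑ j : Fin r, ∑ a : ZMod p,
      if i ≠ j then f (Function.update g i (g i * (g j) ^ (a.val))) +
        f (Function.update g i ((g j) ^ (a.val) * g i)) else 0) /
      (2 * (p : ℝ) * r * ((r : ℝ) - 1)) := by
  unfold paP
  simp_rw [div_mul_eq_mul_div, ← Finset.sum_div, Finset.sum_mul]
  congr 1
  rw [Finset.sum_comm]
  refine Finset.sum_congr rfl fun i _ => ?_
  rw [Finset.sum_comm]
  refine Finset.sum_congr rfl fun j _ => ?_
  rw [Finset.sum_comm]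
  refine Finset.sum_congr rfl fun a _ => ?_
  by_cases h : i = j
  · simp [h]
  · simp [h, add_mul, Finset.sum_add_distrib]

theorem sum_offdiag (r : ℕ) (c : ℝ) :
    ∑ i : Fin r, ∑ j : Fin r, (if i ≠ j then c else 0) = r * (r - 1) * c := by
  have : ∀ i : Fin r, ∑ j : Fin r, (if i ≠ j then c else 0) = (r - 1) * c := by
    intro i
    have : ∀ j : Fin r, (if i ≠ j then c else 0) = c - if i = j then c else 0 := by
      intro j; by_cases h : i = j <;> simp [h]
    simp_rw [this, Finset.sum_sub_distrib]
    simp; ring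
  simp_rw [this]; simp; ring

theorem paP_row (p : ℕ) [Fact (Nat.Prime p)] (r : ℕ) (hr : 2 ≤ r) (H : Type*) [Group H] [Fintype H]
    [DecidableEq H] (g : Fin r → H) : ∑ g', paP p r H g g' = 1 := by
  have h := paP_sum p r H g (fun _ => 1)
  simp only [mul_one] at h
  rw [h]
  have hp : (0:ℝ) < p := by exact_mod_cast (Fact.out : p.Prime).pos
  have hr' : (2:ℝ) ≤ r := by exact_mod_cast hr
  have : ∀ i j : Fin r, ∑ a : ZMod p, (if i ≠ j then (1:ℝ) + 1 else 0) =
      if i ≠ j then (p:ℝ) * 2 else 0 := by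
    intro i j; by_cases h : i = j
    · simp [h]
    · simp [h, ZMod.card]; ring
  simp_rw [this]
  rw [sum_offdiag, div_eq_one_iff_eq]
  · ring
  · have : (0:ℝ) < r - 1 := by linarith
    positivity

theorem pow_neg_val (p : ℕ) [Fact (Nat.Prime p)] {H : Type*} [Group H] (ht : ∀ x : H, x ^ p = 1)
    (x : H) (a : ZMod p) : x ^ (-a).val = (x ^ a.val)⁻¹ := by
  rw [eq_inv_iff_mul_eq_one, ← pow_add]
  have : p ∣ (-a).val + a.val := by
    rw [← ZMod.natCast_eq_zero_iff]; simp
  obtain ⟨k, hk⟩ := this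
  rw [hk, pow_mul, ht, one_pow]

theorem moveR_iff (p : ℕ) [Fact (Nat.Prime p)] {r : ℕ} {H : Type*} [Group H]
    (ht : ∀ x : H, x ^ p = 1) (g g' : Fin r → H) (i j : Fin r) (a : ZMod p)
    (h : i ≠ j ∧ g' = Function.update g i (g i * (g j) ^ (a.val))) :
    i ≠ j ∧ g = Function.update g' i (g' i * (g' j) ^ ((-a).val)) := by
  obtain ⟨hij, rfl⟩ := h
  refine ⟨hij, ?_⟩
  rw [Function.update_of_ne hij.symm, Function.update_self, Function.update_idem,
    pow_neg_val p ht, mul_inv_cancel_right, Function.update_eq_self]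

theorem moveL_iff (p : ℕ) [Fact (Nat.Prime p)] {r : ℕ} {H : Type*} [Group H]
    (ht : ∀ x : H, x ^ p = 1) (g g' : Fin r → H) (i j : Fin r) (a : ZMod p)
    (h : i ≠ j ∧ g' = Function.update g i ((g j) ^ (a.val) * g i)) :
    i ≠ j ∧ g = Function.update g' i ((g' j) ^ ((-a).val) * g' i) := by
  obtain ⟨hij, rfl⟩ := h
  refine ⟨hij, ?_⟩
  rw [Function.update_of_ne hij.symm, Function.update_self, Function.update_idem,
    pow_neg_val p ht, inv_mul_cancel_left, Function.update_eq_self]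

theorem paP_symm (p : ℕ) [Fact (Nat.Prime p)] (r : ℕ) (H : Type*) [Group H] [Fintype H]
    [DecidableEq H] (ht : ∀ x : H, x ^ p = 1) (g g' : Fin r → H) :
    paP p r H g g' = paP p r H g' g := by
  unfold paP
  congr 1
  refine Finset.sum_congr rfl fun i _ => Finset.sum_congr rfl fun j _ => ?_
  rw [← Equiv.sum_comp (Equiv.neg (ZMod p))]
  refine Finset.sum_congr rfl fun a _ => ?_
  simp only [Equiv.neg_apply]
  congr 1
  · refine if_congr ⟨fun h => ?_, fun h => moveR_iff p ht _ _ _ _ _ h⟩ rfl rfl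
    have := moveR_iff p ht _ _ _ _ _ h
    rwa [neg_neg] at this
  · refine if_congr ⟨fun h => ?_, fun h => moveL_iff p ht _ _ _ _ _ h⟩ rfl rfl
    have := moveL_iff p ht _ _ _ _ _ h
    rwa [neg_neg] at this

theorem paDen_nonneg (p r : ℕ) (hr : 2 ≤ r) : 0 ≤ 2 * (p : ℝ) * r * ((r : ℝ) - 1) := by
  have hr' : (2:ℝ) ≤ r := by exact_mod_cast hr
  have : (0:ℝ) ≤ r - 1 := by linarith
  positivity

theorem paP_nonneg (p : ℕ) [Fact (Nat.Prime p)] (r : ℕ) (hr : 2 ≤ r) (H : Type*) [Group H]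
    [Fintype H] [DecidableEq H] (g g' : Fin r → H) : 0 ≤ paP p r H g g' := by
  unfold paP
  refine div_nonneg ?_ (paDen_nonneg p r hr)
  refine Finset.sum_nonneg fun i _ => Finset.sum_nonneg fun j _ => Finset.sum_nonneg fun a _ => ?_
  split_ifs <;> norm_num

theorem paP_ne_zero (p : ℕ) [Fact (Nat.Prime p)] (r : ℕ) (H : Type*) [Group H]
    [Fintype H] [DecidableEq H] (g g' : Fin r → H) (h : paP p r H g g' ≠ 0) :
    ∃ i j : Fin r, ∃ a : ZMod p, i ≠ j ∧ (g' = Function.update g i (g i * (g j) ^ (a.val)) ∨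
      g' = Function.update g i ((g j) ^ (a.val) * g i)) := by
  unfold paP at h
  have h1 := (div_ne_zero_iff.1 h).1
  obtain ⟨i, _, h2⟩ := Finset.exists_ne_zero_of_sum_ne_zero h1
  obtain ⟨j, _, h3⟩ := Finset.exists_ne_zero_of_sum_ne_zero h2
  obtain ⟨a, _, h4⟩ := Finset.exists_ne_zero_of_sum_ne_zero h3
  refine ⟨i, j, a, ?_⟩
  by_contra hc
  apply h4
  rw [if_neg, if_neg, add_zero]
  · exact fun h => hc ⟨h.1, Or.inr h.2⟩
  · exact fun h => hc ⟨h.1, Or.inl h.2⟩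

theorem paP_pos (p : ℕ) [Fact (Nat.Prime p)] (r : ℕ) (hr : 2 ≤ r) (H : Type*) [Group H]
    [Fintype H] [DecidableEq H] (g : Fin r → H) (i j : Fin r) (hij : i ≠ j) :
    0 < paP p r H g (Function.update g i (g i * g j)) := by
  have hp : (0:ℝ) < p := by exact_mod_cast (Fact.out : p.Prime).pos
  have hr' : (2:ℝ) ≤ r := by exact_mod_cast hr
  unfold paP
  refine div_pos ?_ (by have : (0:ℝ) < r - 1 := by linarith
                        positivity)
  have h1 : Fact (1 < p) := ⟨(Fact.out : p.Prime).one_lt⟩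
  refine Finset.sum_pos' (fun i _ => Finset.sum_nonneg fun j _ => Finset.sum_nonneg fun a _ => ?_)
    ⟨i, Finset.mem_univ _, Finset.sum_pos' (fun j _ => Finset.sum_nonneg fun a _ => ?_)
      ⟨j, Finset.mem_univ _, Finset.sum_pos' (fun a _ => ?_) ⟨1, Finset.mem_univ _, ?_⟩⟩⟩
  · split_ifs <;> norm_num
  · split_ifs <;> norm_num
  · split_ifs <;> norm_num
  · rw [if_pos ⟨hij, by rw [ZMod.val_one, pow_one]⟩]
    split_ifs <;> norm_num

theorem genSet_of_step {r : ℕ} {H : Type*} [Group H] (g g' : Fin r → H) (hg : g ∈ genSet r H)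
    (i j : Fin r) (n : ℕ) (hij : i ≠ j) (h : g' = Function.update g i (g i * (g j) ^ n) ∨
      g' = Function.update g i ((g j) ^ n * g i)) : g' ∈ genSet r H := by
  unfold genSet at *
  simp only [Set.mem_ofPred_eq] at *
  rw [eq_top_iff, ← hg, Subgroup.closure_le]
  rintro _ ⟨k, rfl⟩
  have hk : ∀ k, k ≠ i → g k ∈ Subgroup.closure (Set.range g') := by
    intro k hk
    have : g' k = g k := by rcases h with rfl | rfl <;> rw [Function.update_of_ne hk]
    rw [← this]; exact Subgroup.subset_closure ⟨k, rfl⟩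
  by_cases hki : k = i
  · subst hki
    have h1 := Subgroup.pow_mem _ (hk j hij.symm) n
    have h2 : g' k ∈ Subgroup.closure (Set.range g') := Subgroup.subset_closure ⟨k, rfl⟩
    rcases h with h | h
    · have h3 : g' k = g k * g j ^ n := by rw [h, Function.update_self]
      rw [h3] at h2
      exact (Subgroup.mul_mem_cancel_right _ h1).1 h2
    · have h3 : g' k = g j ^ n * g k := by rw [h, Function.update_self]
      rw [h3] at h2
      exact (Subgroup.mul_mem_cancel_left _ h1).1 h2
  · exact hk k hki

theorem paQ_good (p : ℕ) [Fact (Nat.Prime p)] (r : ℕ) (hr : 2 ≤ r) (H : Type*) [Group H]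
    [Fintype H] [DecidableEq H] (ht : ∀ x : H, x ^ p = 1) : GoodM (genSet r H) (paQ p r H) := by
  have happ : ∀ g g', paQ p r H g g' = 2⁻¹ * ((1 : Matrix (Fin r → H) (Fin r → H) ℝ) g g' +
      paP p r H g g') := fun g g' => rfl
  have h1 := GoodM.one (genSet r H)
  have cl : ∀ x ∈ genSet r H, ∀ y, y ∉ genSet r H → paP p r H x y = 0 := by
    intro x hx y hy
    by_contra h
    obtain ⟨i, j, a, hij, h'⟩ := paP_ne_zero p r H x y h
    exact hy (genSet_of_step x y hx i j _ hij h')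
  refine ⟨fun x y => ?_, fun x => ?_, fun y => ?_, fun x hx y hy => ?_, fun x hx y hy => ?_⟩
  · rw [happ]; have := h1.1 x y; have := paP_nonneg p r hr H x y; positivity
  · simp_rw [happ, ← Finset.mul_sum, Finset.sum_add_distrib]
    rw [h1.2.1, paP_row p r hr]; norm_num
  · simp_rw [happ, ← Finset.mul_sum, Finset.sum_add_distrib, paP_symm p r H ht _ y]
    rw [h1.2.2.1, paP_row p r hr]; norm_num
  · rw [happ, h1.2.2.2.1 x hx y hy, cl x hx y hy]; norm_num
  · rw [happ, h1.2.2.2.2 x hx y hy, paP_symm p r H ht, cl y hy x hx]; norm_num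

theorem paQ_supp (p : ℕ) [Fact (Nat.Prime p)] (r : ℕ) (H : Type*) [Group H]
    [Fintype H] [DecidableEq H] (g : Fin r → H) :
    (Finset.univ.filter (fun y => paQ p r H g y ≠ 0)).card ≤ 2 * p * r ^ 2 + 1 := by
  classical
  have hsub : (Finset.univ.filter (fun y => paQ p r H g y ≠ 0)) ⊆ {g} ∪
      ((Finset.univ : Finset (Fin r × Fin r × ZMod p)).image
        (fun x => Function.update g x.1 (g x.1 * (g x.2.1) ^ (x.2.2.val))) ∪
      (Finset.univ : Finset (Fin r × Fin r × ZMod p)).image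
        (fun x => Function.update g x.1 ((g x.2.1) ^ (x.2.2.val) * g x.1))) := by
    intro y hy
    simp only [Finset.mem_filter, Finset.mem_univ, true_and] at hy
    simp only [Finset.mem_union, Finset.mem_singleton, Finset.mem_image, Finset.mem_univ, true_and]
    by_cases hyg : y = g
    · exact Or.inl hyg
    · right
      have happ : paQ p r H g y = 2⁻¹ * ((1 : Matrix (Fin r → H) (Fin r → H) ℝ) g y +
        paP p r H g y) := rfl
      rw [happ, Matrix.one_apply, if_neg (Ne.symm hyg), zero_add] at hy
      obtain ⟨i, j, a, hij, h | h⟩ := paP_ne_zero p r H g y (right_ne_zero_of_mul hy)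
      · exact Or.inl ⟨(i, j, a), h.symm⟩
      · exact Or.inr ⟨(i, j, a), h.symm⟩
  refine (Finset.card_le_card hsub).trans ((Finset.card_union_le _ _).trans ?_)
  have h1 : (Finset.univ : Finset (Fin r × Fin r × ZMod p)).card = r * (r * p) := by
    simp [ZMod.card]
  have h2 := Finset.card_union_le ((Finset.univ : Finset (Fin r × Fin r × ZMod p)).image
        (fun x => Function.update g x.1 (g x.1 * (g x.2.1) ^ (x.2.2.val))))
      ((Finset.univ : Finset (Fin r × Fin r × ZMod p)).image
        (fun x => Function.update g x.1 ((g x.2.1) ^ (x.2.2.val) * g x.1)))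
  have h3 := Finset.card_image_le (s := (Finset.univ : Finset (Fin r × Fin r × ZMod p)))
        (f := fun x => Function.update g x.1 (g x.1 * (g x.2.1) ^ (x.2.2.val)))
  have h4 := Finset.card_image_le (s := (Finset.univ : Finset (Fin r × Fin r × ZMod p)))
        (f := fun x => Function.update g x.1 ((g x.2.1) ^ (x.2.2.val) * g x.1))
  rw [h1] at h3 h4
  rw [Finset.card_singleton]
  nlinarith

/-- number of non-identity entries -/
def nnId {r : ℕ} {H : Type*} [Group H] [DecidableEq H] (g : Fin r → H) : ℝ :=
  ∑ i, if g i = 1 then 0 else 1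

theorem nnId_nonneg {r : ℕ} {H : Type*} [Group H] [DecidableEq H] (g : Fin r → H) :
    0 ≤ nnId g := Finset.sum_nonneg fun i _ => by split_ifs <;> norm_num

theorem nnId_update {r : ℕ} {H : Type*} [Group H] [DecidableEq H] (g : Fin r → H) (i j : Fin r)
    (w : H) (hw : g j = 1 → w = g i) :
    nnId (Function.update g i w) ≤ nnId g + if g j = 1 then 0 else 1 := by
  by_cases h : g j = 1
  · rw [hw h, Function.update_eq_self]; simp [h]
  · rw [if_neg h]
    unfold nnId
    rw [← Finset.add_sum_erase _ _ (Finset.mem_univ i),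
      ← Finset.add_sum_erase (Finset.univ) (fun i => if g i = 1 then (0:ℝ) else 1)
        (Finset.mem_univ i)]
    have : ∑ x ∈ Finset.univ.erase i, (if Function.update g i w x = 1 then (0:ℝ) else 1) =
        ∑ x ∈ Finset.univ.erase i, (if g x = 1 then (0:ℝ) else 1) := by
      refine Finset.sum_congr rfl fun x hx => ?_
      rw [Function.update_of_ne (Finset.ne_of_mem_erase hx)]
    rw [this]
    split_ifs <;> linarith

theorem paQ_nnId (p : ℕ) [Fact (Nat.Prime p)] (r : ℕ) (hr : 2 ≤ r) (H : Type*) [Group H]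
    [Fintype H] [DecidableEq H] (g : Fin r → H) :
    ∑ y, paQ p r H g y * nnId y ≤ (1 + 1 / (2 * r)) * nnId g := by
  have hp : (0:ℝ) < p := by exact_mod_cast (Fact.out : p.Prime).pos
  have hr' : (2:ℝ) ≤ r := by exact_mod_cast hr
  have hr1 : (0:ℝ) < r - 1 := by linarith
  have happ : ∀ y, paQ p r H g y * nnId y = 2⁻¹ * ((1 : Matrix (Fin r → H) (Fin r → H) ℝ) g y *
      nnId y + paP p r H g y * nnId y) := fun y => by
    rw [← add_mul, ← mul_assoc]; rfl
  simp_rw [happ, ← Finset.mul_sum, Finset.sum_add_distrib, paP_sum]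
  have hone : ∑ y, (1 : Matrix (Fin r → H) (Fin r → H) ℝ) g y * nnId y = nnId g := by
    simp [Matrix.one_apply]
  rw [hone]
  have key : ∀ i j : Fin r, ∑ a : ZMod p,
      (if i ≠ j then nnId (Function.update g i (g i * (g j) ^ (a.val))) +
        nnId (Function.update g i ((g j) ^ (a.val) * g i)) else 0) ≤
      (if i ≠ j then 2 * p * nnId g else 0) +
        (if i ≠ j then 2 * p * (if g j = 1 then (0:ℝ) else 1) else 0) := by
    intro i j
    by_cases h : i = j
    · simp [h]
    · simp only [ne_eq, h, not_false_eq_true, if_true]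
      calc _ ≤ ∑ a : ZMod p, 2 * (nnId g + if g j = 1 then (0:ℝ) else 1) := by
            refine Finset.sum_le_sum fun a _ => ?_
            have h1 := nnId_update g i j (g i * (g j) ^ (a.val)) (fun h => by rw [h]; simp)
            have h2 := nnId_update g i j ((g j) ^ (a.val) * g i) (fun h => by rw [h]; simp)
            linarith
        _ = _ := by
            rw [Finset.sum_const, Finset.card_univ, ZMod.card, nsmul_eq_mul]; ring
  have hsum : ∑ i : Fin r, ∑ j : Fin r, (if i ≠ j then 2 * p * (if g j = 1 then (0:ℝ) else 1) else 0)
      = 2 * p * (r - 1) * nnId g := by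
    rw [Finset.sum_comm]
    unfold nnId
    rw [Finset.mul_sum]
    refine Finset.sum_congr rfl fun j _ => ?_
    have : ∀ i : Fin r, (if i ≠ j then 2 * p * (if g j = 1 then (0:ℝ) else 1) else 0) =
      2 * p * (if g j = 1 then (0:ℝ) else 1) -
        if i = j then 2 * p * (if g j = 1 then (0:ℝ) else 1) else 0 := by
      intro i; by_cases h : i = j <;> simp [h]
    simp_rw [this, Finset.sum_sub_distrib]
    simp; split_ifs <;> ring
  have tot := Finset.sum_le_sum fun i (_ : i ∈ (Finset.univ : Finset (Fin r))) =>
    Finset.sum_le_sum fun j (_ : j ∈ (Finset.univ : Finset (Fin r))) => key i j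
  simp_rw [Finset.sum_add_distrib] at tot
  rw [sum_offdiag, hsum] at tot
  have hD : 0 < 2 * (p : ℝ) * r * ((r : ℝ) - 1) := by positivity
  have := div_le_div_of_nonneg_right tot hD.le
  calc _ ≤ 2⁻¹ * (nnId g + (r * (r - 1) * (2 * p * nnId g) + 2 * p * (r - 1) * nnId g) /
        (2 * (p : ℝ) * r * ((r : ℝ) - 1))) := by gcongr
    _ = _ := by field_simp; ring
/-! connectivity -/

def RedAt {K W Z : Type*} [Field K] [AddCommGroup W] [Module K W] {r : ℕ}
    (g : Fin r → W × Z) (i : Fin r) : Prop :=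
  Submodule.span K ((fun j => (g j).1) '' {i}ᶜ) = ⊤

theorem redAt_of_mem (K : Type*) {W Z : Type*} [Field K] [AddCommGroup W] [Module K W] {r : ℕ}
    (g : Fin r → W × Z) (i : Fin r)
    (hs : Submodule.span K (Set.range (fun j => (g j).1)) = ⊤)
    (hi : (g i).1 ∈ Submodule.span K ((fun j => (g j).1) '' {i}ᶜ)) : RedAt (K := K) g i := by
  unfold RedAt
  rw [eq_top_iff, ← hs, Submodule.span_le]
  rintro _ ⟨j, rfl⟩
  by_cases h : j = i
  · subst h; exact hi
  · exact Submodule.subset_span ⟨j, h, rfl⟩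

theorem RedAt.span_update {K W Z : Type*} [Field K] [AddCommGroup W] [Module K W] {r : ℕ}
    {g : Fin r → W × Z} {i : Fin r} (h : RedAt (K := K) g i) (w : W × Z) :
    Submodule.span K (Set.range (fun j => (Function.update g i w j).1)) = ⊤ := by
  unfold RedAt at h
  rw [eq_top_iff, ← h]
  apply Submodule.span_mono
  rintro _ ⟨j, hj, rfl⟩
  exact ⟨j, by simp only [Function.update_of_ne hj]⟩

theorem RedAt.span {K W Z : Type*} [Field K] [AddCommGroup W] [Module K W] {r : ℕ}
    {g : Fin r → W × Z} {i : Fin r} (h : RedAt (K := K) g i) :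
    Submodule.span K (Set.range (fun j => (g j).1)) = ⊤ := by
  have := h.span_update (g i)
  rwa [Function.update_eq_self] at this

theorem RedAt.update {K W Z : Type*} [Field K] [AddCommGroup W] [Module K W] {r : ℕ}
    {g : Fin r → W × Z} {i : Fin r} (h : RedAt (K := K) g i) (w : W × Z) :
    RedAt (K := K) (Function.update g i w) i := by
  unfold RedAt at *
  rw [← h]
  congr 1
  refine Set.image_congr fun j hj => ?_
  rw [Function.update_of_ne hj]

theorem redAt_of_eq (K : Type*) {W Z : Type*} [Field K] [AddCommGroup W] [Module K W] {r : ℕ}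
    (g : Fin r → W × Z) (i j : Fin r) (hij : i ≠ j) (h : g i = g j)
    (hs : Submodule.span K (Set.range (fun j => (g j).1)) = ⊤) : RedAt (K := K) g i := by
  apply redAt_of_mem K g i hs
  rw [h]
  exact Submodule.subset_span ⟨j, hij.symm, rfl⟩

theorem exists_redAt (K : Type*) {W Z : Type*} [Field K] [AddCommGroup W] [Module K W]
    [FiniteDimensional K W] {r : ℕ} (hr : Module.finrank K W < r)
    (g : Fin r → W × Z) (hs : Submodule.span K (Set.range (fun j => (g j).1)) = ⊤) :
    ∃ i, RedAt (K := K) g i := by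
  by_contra hc
  push Not at hc
  have : LinearIndependent K (fun j => (g j).1) := by
    rw [linearIndependent_iff_notMem_span]
    intro i hi
    apply hc i
    apply redAt_of_mem K g i hs
    rwa [Set.compl_eq_univ_sdiff]
  have := this.fintype_card_le_finrank
  rw [Fintype.card_fin] at this
  omega

theorem exchange {K W ι : Type*} [Field K] [AddCommGroup W] [Module K W] (v : ι → W)
    (C : Set ι) (y : W) (hy : y ∉ Submodule.span K (v '' C)) (T : Finset ι) 
    (h : y ∈ Submodule.span K (v '' (C ∪ T))) :
    ∃ k ∈ T, k ∉ C ∧ v k ∈ Submodule.span K (insert y (v '' ((C ∪ T) \ {k}))) := by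
  classical
  induction T using Finset.induction_on with
  | empty => simp at h; exact absurd h hy
  | insert a T ha ih =>
    by_cases h2 : y ∈ Submodule.span K (v '' (C ∪ T))
    · obtain ⟨k, hk, hkC, hk2⟩ := ih h2
      refine ⟨k, Finset.mem_insert_of_mem hk, hkC, Submodule.span_mono ?_ hk2⟩
      apply Set.insert_subset_insert
      apply Set.image_mono
      intro x hx
      simp only [Finset.coe_insert, Set.mem_sdiff, Set.mem_union, Set.mem_insert_iff] at hx ⊢
      tauto
    · have haC : a ∉ C := by
        intro haC
        apply h2
        convert h using 3
        ext x
        simp only [Finset.coe_insert, Set.mem_union, Set.mem_insert_iff]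
        constructor
        · tauto
        · rintro (h | rfl | h) <;> tauto
      refine ⟨a, Finset.mem_insert_self _ _, haC, ?_⟩
      have e : v '' (C ∪ ((insert a T : Finset ι) : Set ι)) = insert (v a) (v '' (C ∪ T)) := by
        rw [← Set.image_insert_eq, Finset.coe_insert, Set.union_insert]
      rw [e] at h
      have := mem_span_insert_exchange h h2
      convert this using 4
      ext x
      simp only [Finset.coe_insert, Set.mem_sdiff, Set.mem_union, Set.mem_insert_iff,
        Set.mem_singleton_iff]
      constructor
      · tauto
      · intro hx
        refine ⟨by tauto, ?_⟩
        rintro rfl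
        rcases hx with hx | hx
        · exact haC hx
        · exact ha hx

theorem connected_aux (K : Type*) {W Z : Type*} [Field K] [AddCommGroup W] [Module K W]
    [FiniteDimensional K W] {r : ℕ} (hr : Module.finrank K W < r)
    (R : (Fin r → W × Z) → (Fin r → W × Z) → Prop) (hR : Equivalence R)
    (hmove : ∀ g i w, RedAt (K := K) g i → R g (Function.update g i w)) (n : ℕ) :
    ∀ g g' : Fin r → W × Z, Submodule.span K (Set.range (fun j => (g j).1)) = ⊤ →
      Submodule.span K (Set.range (fun j => (g' j).1)) = ⊤ →
      Set.ncard {i | g i ≠ g' i} ≤ n → R g g' := by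
  classical
  induction n with
  | zero =>
    intro g g' _ _ h
    have h0 : {i | g i ≠ g' i} = ∅ := by
      rw [← Set.ncard_eq_zero]; omega
    have : g = g' := by
      funext i
      by_contra hi
      have : i ∈ {i | g i ≠ g' i} := hi
      rw [h0] at this; exact this
    rw [this]; exact hR.refl _
  | succ n ih =>
    intro g g' hg hg' h
    have dec : ∀ (B : Set (Fin r)) (j : Fin r), g j ≠ g' j → (∀ i ∈ B, g i ≠ g' i) →
        j ∉ B → B.ncard ≤ n := by
      intro B j hj hB hjB
      have : B ⊂ {i | g i ≠ g' i} := ⟨fun i hi => hB i hi, fun hc => hjB (hc hj)⟩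
      have := Set.ncard_lt_ncard this
      omega
    by_cases heq : g = g'
    · rw [heq]; exact hR.refl _
    obtain ⟨j, hj⟩ : ∃ j, g j ≠ g' j := by
      by_contra hc; push Not at hc; exact heq (funext hc)
    by_cases hred : RedAt (K := K) g' j
    · refine hR.trans (ih g (Function.update g' j (g j)) hg (hred.span_update _) ?_)
        (hR.symm (hmove _ _ _ hred))
      refine dec _ j hj ?_ ?_
      · intro i hi
        by_cases hij : i = j
        · rw [hij]; exact hj
        · simpa [Function.update_of_ne hij] using hi
      · simp
    obtain ⟨i, hi⟩ := exists_redAt K hr g hg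
    by_cases hgi : g i = g' i
    swap
    · refine hR.trans (hmove g i (g' i) hi) (ih _ g' (hi.span_update _) hg' ?_)
      refine dec _ i hgi ?_ ?_
      · intro k hk
        by_cases hki : k = i
        · rw [hki]; exact hgi
        · simpa [Function.update_of_ne hki] using hk
      · simp
    -- main case
    have hij : i ≠ j := by rintro rfl; exact hj hgi
    set C : Set (Fin r) := {l | g l = g' l ∧ l ≠ i} with hC
    have hyC : (g' j).1 ∉ Submodule.span K ((fun l => (g l).1) '' C) := by
      intro hc
      apply hred
      apply redAt_of_mem K g' j hg'
      refine Submodule.span_mono ?_ hc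
      rintro _ ⟨l, hl, rfl⟩
      refine ⟨l, ?_, by simp only [hl.1]⟩
      rintro rfl
      exact hj hl.1
    obtain ⟨k, hkT, hkC, hk⟩ := exchange (fun l => (g l).1) C (g' j).1 hyC
      (Finset.univ.filter (fun l => l ≠ i)) (by
        unfold RedAt at hi
        have : C ∪ ((Finset.univ.filter (fun l => l ≠ i) : Finset (Fin r)) : Set (Fin r)) = {i}ᶜ := by
          ext x; simp [hC]
        rw [this, hi]; trivial)
    have hki : k ≠ i := by simpa using hkT
    have hkB : g k ≠ g' k := fun h => hkC ⟨h, hki⟩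
    set g1 := Function.update g i (g' j) with hg1
    have s1 : R g g1 := hmove _ _ _ hi
    have g1s := hi.span_update (g' j)
    have r1 : RedAt (K := K) g1 k := by
      apply redAt_of_mem K g1 k g1s
      have : (g1 k).1 = (g k).1 := by rw [hg1, Function.update_of_ne hki]
      rw [this]
      refine Submodule.span_mono ?_ hk
      rintro x (rfl | ⟨l, hl, rfl⟩)
      · exact ⟨i, hki.symm, by simp [hg1]⟩
      · have hli : l ≠ i := by
          rcases hl.1 with h | h
          · exact h.2
          · simpa using h
        exact ⟨l, hl.2, by simp [hg1, Function.update_of_ne hli]⟩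
    set g2 := Function.update g1 k (g j) with hg2
    have s2 : R g1 g2 := hmove _ _ _ r1
    have g2s := r1.span_update (g j)
    have r2 : RedAt (K := K) g2 j := by
      by_cases hkj : k = j
      · rw [hg2, hkj]; rw [hkj] at r1; exact r1.update _
      · apply redAt_of_eq K g2 j k (Ne.symm hkj) _ g2s
        simp [hg2, hg1, Function.update_of_ne hij.symm, Function.update_of_ne (Ne.symm hkj)]
    set g3 := Function.update g2 j (g' j) with hg3
    have s3 : R g2 g3 := hmove _ _ _ r2
    have g3s := r2.span_update (g' j)
    have r3 : RedAt (K := K) g3 i := by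
      apply redAt_of_eq K g3 i j hij _ g3s
      simp [hg3, hg2, hg1, Function.update_of_ne hij, Function.update_of_ne hki.symm]
    have s4 := hmove _ _ (g i) r3
    refine hR.trans s1 (hR.trans s2 (hR.trans s3 (hR.trans s4 (ih _ g' (r3.span_update _) hg' ?_))))
    refine dec _ j hj ?_ ?_
    · intro l hl
      by_cases hli : l = i
      · subst hli; simp [hgi] at hl
      by_cases hlj : l = j
      · rw [hlj]; exact hj
      by_cases hlk : l = k
      · rw [hlk]; exact hkB
      · simpa [hg3, hg2, hg1, Function.update_of_ne hli, Function.update_of_ne hlj,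
          Function.update_of_ne hlk] using hl
    · simp [hg3, Function.update_of_ne hij.symm]
/-! Heisenberg group facts -/

theorem heis_mul {p : ℕ} {W : Type*} [Fact (Nat.Prime p)] [AddCommGroup W]
    [Module (ZMod p) W] [HeisData p W] (x y : W × ZMod p) :
    x * y = (x.1 + y.1, x.2 + y.2 + (2 : ZMod p)⁻¹ * HeisData.ω x.1 y.1) := rfl

theorem heis_one {p : ℕ} {W : Type*} [Fact (Nat.Prime p)] [AddCommGroup W]
    [Module (ZMod p) W] [HeisData p W] : (1 : W × ZMod p) = (0, 0) := rfl

theorem heis_inv {p : ℕ} {W : Type*} [Fact (Nat.Prime p)] [AddCommGroup W]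
    [Module (ZMod p) W] [HeisData p W] (x : W × ZMod p) :
    x⁻¹ = (-x.1, -x.2 + (2 : ZMod p)⁻¹ * HeisData.ω x.1 x.1) := rfl

theorem heis_pow {p : ℕ} {W : Type*} [Fact (Nat.Prime p)] [AddCommGroup W]
    [Module (ZMod p) W] [HeisData p W] (halt : ∀ v : W, HeisData.ω (p := p) v v = 0)
    (x : W × ZMod p) (n : ℕ) : x ^ n = (((n : ZMod p) • x.1 : W), (n : ZMod p) * x.2) := by
  induction n with
  | zero => rw [pow_zero, heis_one]; simp
  | succ n ih =>
    rw [pow_succ, ih, heis_mul]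
    refine Prod.ext ?_ ?_
    · simp [add_smul]
    · simp [halt]; ring

theorem heis_torsion {p : ℕ} {W : Type*} [Fact (Nat.Prime p)] [AddCommGroup W]
    [Module (ZMod p) W] [HeisData p W] (halt : ∀ v : W, HeisData.ω (p := p) v v = 0)
    (x : W × ZMod p) : x ^ p = 1 := by
  rw [heis_pow halt, heis_one]; simp

theorem heis_skew {p : ℕ} {W : Type*} [Fact (Nat.Prime p)] [AddCommGroup W]
    [Module (ZMod p) W] [HeisData p W] (halt : ∀ v : W, HeisData.ω (p := p) v v = 0)
    (u v : W) : HeisData.ω (p := p) v u = - HeisData.ω (p := p) u v := by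
  have := halt (u + v)
  simp only [map_add, LinearMap.add_apply, halt, zero_add, add_zero] at this
  exact eq_neg_of_add_eq_zero_left this

theorem heis_comm {p : ℕ} {W : Type*} [Fact (Nat.Prime p)] (hp : p ≠ 2) [AddCommGroup W]
    [Module (ZMod p) W] [HeisData p W] (halt : ∀ v : W, HeisData.ω (p := p) v v = 0)
    (x y : W × ZMod p) : x * y * x⁻¹ * y⁻¹ = (0, HeisData.ω x.1 y.1) := by
  have h2 : (2 : ZMod p) ≠ 0 := by
    have : ((2 : ℕ) : ZMod p) ≠ 0 := by
      rw [Ne, ZMod.natCast_eq_zero_iff]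
      intro h
      exact hp ((Nat.prime_dvd_prime_iff_eq Fact.out Nat.prime_two).1 h)
    simpa using this
  simp only [heis_mul, heis_inv]
  refine Prod.ext ?_ ?_
  · simp
  · simp only [map_add, map_neg, LinearMap.add_apply, LinearMap.neg_apply, halt,
      heis_skew halt x.1 y.1]
    field_simp
    ring

theorem closure_eq_top {p : ℕ} {W : Type*} [Fact (Nat.Prime p)] (hp : p ≠ 2) [AddCommGroup W]
    [Module (ZMod p) W] [HeisData p W] (halt : ∀ v : W, HeisData.ω (p := p) v v = 0)
    (hnd : ∀ v : W, (∀ w : W, HeisData.ω (p := p) v w = 0) → v = 0) [Nontrivial W]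
    (S : Set (W × ZMod p)) (hS : Submodule.span (ZMod p) (Prod.fst '' S) = ⊤) :
    Subgroup.closure S = ⊤ := by
  set K := Subgroup.closure S with hK
  have surj : ∀ v : W, ∃ z : ZMod p, (v, z) ∈ K := by
    intro v
    have hv : v ∈ Submodule.span (ZMod p) (Prod.fst '' S) := by rw [hS]; trivial
    induction hv using Submodule.span_induction with
    | mem x hx =>
      obtain ⟨s, hs, rfl⟩ := hx
      exact ⟨s.2, Subgroup.subset_closure hs⟩
    | zero => exact ⟨0, K.one_mem⟩
    | add x y _ _ hx hy =>
      obtain ⟨z, hz⟩ := hx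
      obtain ⟨t, ht⟩ := hy
      exact ⟨_, K.mul_mem hz ht⟩
    | smul a x _ hx =>
      obtain ⟨z, hz⟩ := hx
      have := K.pow_mem hz a.val
      rw [heis_pow halt] at this
      simp only [ZMod.natCast_val, ZMod.cast_id', id_eq] at this
      exact ⟨_, this⟩
  obtain ⟨u, hu⟩ := exists_ne (0 : W)
  obtain ⟨w, hw⟩ : ∃ w, HeisData.ω (p := p) u w ≠ 0 := by
    by_contra hc; push Not at hc; exact hu (hnd u hc)
  obtain ⟨z, hz⟩ := surj u
  obtain ⟨t, ht⟩ := surj w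
  have hc : ((0 : W), HeisData.ω (p := p) u w) ∈ K := by
    have := heis_comm hp halt (u, z) (w, t)
    simp only at this
    rw [← this]
    exact K.mul_mem (K.mul_mem (K.mul_mem hz ht) (K.inv_mem hz)) (K.inv_mem ht)
  have cent : ∀ c : ZMod p, ((0 : W), c) ∈ K := by
    intro c
    have := K.pow_mem hc (c * (HeisData.ω (p := p) u w)⁻¹).val
    rw [heis_pow halt] at this
    simp only [ZMod.natCast_val, ZMod.cast_id', id_eq, smul_zero] at this
    rwa [mul_assoc, inv_mul_cancel₀ hw, mul_one] at this
  rw [eq_top_iff]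
  rintro ⟨v, c⟩ -
  obtain ⟨z, hz⟩ := surj v
  have := K.mul_mem hz (cent (c - z))
  rw [heis_mul] at this
  simpa using this

theorem span_eq_top {p : ℕ} {W : Type*} [Fact (Nat.Prime p)] [AddCommGroup W]
    [Module (ZMod p) W] [HeisData p W]
    (S : Set (W × ZMod p)) (hS : Subgroup.closure S = ⊤) :
    Submodule.span (ZMod p) (Prod.fst '' S) = ⊤ := by
  rw [eq_top_iff]
  intro v _
  have hv : ((v, 0) : W × ZMod p) ∈ Subgroup.closure S := by rw [hS]; trivial
  suffices ∀ x ∈ Subgroup.closure S, x.1 ∈ Submodule.span (ZMod p) (Prod.fst '' S) from this _ hv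
  intro x hx
  induction hx using Subgroup.closure_induction with
  | mem x hx => exact Submodule.subset_span ⟨x, hx, rfl⟩
  | one => exact Submodule.zero_mem _
  | mul x y _ _ hx hy => exact Submodule.add_mem _ hx hy
  | inv x _ hx => exact Submodule.neg_mem _ hx

theorem mem_genSet_iff {p : ℕ} {W : Type*} [Fact (Nat.Prime p)] (hp : p ≠ 2) [AddCommGroup W]
    [Module (ZMod p) W] [HeisData p W] (halt : ∀ v : W, HeisData.ω (p := p) v v = 0)
    (hnd : ∀ v : W, (∀ w : W, HeisData.ω (p := p) v w = 0) → v = 0) [Nontrivial W] {r : ℕ}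
    (g : Fin r → W × ZMod p) : g ∈ genSet r (W × ZMod p) ↔
      Submodule.span (ZMod p) (Set.range (fun j => (g j).1)) = ⊤ := by
  have e : Set.range (fun j => (g j).1) = Prod.fst '' Set.range g := by
    rw [← Set.range_comp]; rfl
  rw [e]
  exact ⟨fun h => span_eq_top _ h, fun h => closure_eq_top hp halt hnd _ h⟩

theorem irred {p : ℕ} {W : Type*} [Fact (Nat.Prime p)] (hp : p ≠ 2) [AddCommGroup W]
    [Module (ZMod p) W] [Fintype W] [DecidableEq W] [HeisData p W]
    (halt : ∀ v : W, HeisData.ω (p := p) v v = 0)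
    (hnd : ∀ v : W, (∀ w : W, HeisData.ω (p := p) v w = 0) → v = 0) [Nontrivial W] {r : ℕ}
    (hr2 : 2 ≤ r) (hr : Module.finrank (ZMod p) W < r) (g g' : Fin r → W × ZMod p)
    (hg : g ∈ genSet r (W × ZMod p)) (hg' : g' ∈ genSet r (W × ZMod p)) :
    Relation.ReflTransGen (fun a b => 0 < paQ p r (W × ZMod p) a b) g g' := by
  have happ : ∀ g g', paQ p r (W × ZMod p) g g' =
      2⁻¹ * ((1 : Matrix (Fin r → W × ZMod p) (Fin r → W × ZMod p) ℝ) g g' +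
      paP p r (W × ZMod p) g g') := fun g g' => rfl
  set R := Relation.ReflTransGen (fun a b => 0 < paQ p r (W × ZMod p) a b) with hR
  have hsym : ∀ a b, R a b → R b a := by
    intro a b h
    induction h with
    | refl => exact Relation.ReflTransGen.refl
    | @tail a b _ hab ih =>
      refine Relation.ReflTransGen.head ?_ ih
      rw [happ] at hab ⊢
      rw [paP_symm p r _ (heis_torsion halt), Matrix.one_apply]
      rw [Matrix.one_apply] at hab
      by_cases h : a = b
      · simpa [h] using hab
      · simpa [h, Ne.symm h] using hab
  have heq : Equivalence R :=
    ⟨fun a => Relation.ReflTransGen.refl, fun h => hsym _ _ h, fun h1 h2 => h1.trans h2⟩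
  have hstep : ∀ (g : Fin r → W × ZMod p) i j, i ≠ j → R g (Function.update g i (g i * g j)) := by
    intro g i j hij
    apply Relation.ReflTransGen.single
    rw [happ]
    have h1 := paP_pos p r hr2 (W × ZMod p) g i j hij
    have h2 := (GoodM.one (Set.univ)).1 g (Function.update g i (g i * g j))
    positivity
  refine connected_aux (ZMod p) hr R heq ?_ _ g g' ((mem_genSet_iff hp halt hnd g).1 hg)
    ((mem_genSet_iff hp halt hnd g').1 hg') le_rfl
  intro g i w hred
  have hcl : Subgroup.closure (g '' {i}ᶜ) = ⊤ := by
    apply closure_eq_top hp halt hnd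
    rw [Set.image_image]
    exact hred
  have key : ∀ u ∈ Subgroup.closure (g '' {i}ᶜ), ∀ w,
      R (Function.update g i w) (Function.update g i (w * u)) := by
    intro u hu
    induction hu using Subgroup.closure_induction with
    | mem x hx =>
      obtain ⟨j, hj, rfl⟩ := hx
      intro w
      have := hstep (Function.update g i w) i j (Ne.symm hj)
      rwa [Function.update_self, Function.update_of_ne hj, Function.update_idem] at this
    | one => intro w; rw [mul_one]
    | mul x y _ _ hx hy =>
      intro w
      rw [← mul_assoc]
      exact heq.trans (hx w) (hy _)
    | inv x _ hx =>
      intro w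
      have := hx (w * x⁻¹)
      rw [inv_mul_cancel_right] at this
      exact heq.symm this
  have := key ((g i)⁻¹ * w) (hcl ▸ Subgroup.mem_top _) (g i)
  rwa [Function.update_eq_self, mul_inv_cancel_left] at this

/-! counting -/

theorem card_ker {p : ℕ} {W : Type*} [Fact (Nat.Prime p)] [AddCommGroup W]
    [Module (ZMod p) W] [Fintype W] (φ : W →ₗ[ZMod p] ZMod p) (hφ : φ ≠ 0) :
    Nat.card {x : W × ZMod p // φ x.1 = 0} * p = Nat.card (W × ZMod p) := by
  let ψ : (W × ZMod p) →ₗ[ZMod p] ZMod p := φ.comp (LinearMap.fst _ _ _)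
  have hψ : ψ ≠ 0 := by
    intro h
    apply hφ
    ext w
    have := congrArg (fun f => f (w, 0)) h
    simpa [ψ] using this
  have hs : Function.Surjective ψ := LinearMap.surjective hψ
  have h1 := Submodule.card_eq_card_quotient_mul_card (LinearMap.ker ψ)
  have h2 : Nat.card ((W × ZMod p) ⧸ LinearMap.ker ψ) = p := by
    rw [Nat.card_congr (ψ.quotKerEquivOfSurjective hs).toEquiv, Nat.card_zmod]
  rw [h2] at h1
  rw [h1]
  have h3 : Nat.card {x : W × ZMod p // φ x.1 = 0} = Nat.card (LinearMap.ker ψ) :=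
    Nat.card_congr (Equiv.subtypeEquivRight (fun x => by simp [ψ]))
  rw [h3]

theorem card_heis {p : ℕ} {W : Type*} [Fact (Nat.Prime p)] [AddCommGroup W]
    [Module (ZMod p) W] [Fintype W] (m : ℕ) (hm : Module.finrank (ZMod p) W = 2 * m) :
    Nat.card (W × ZMod p) = p ^ (2 * m + 1) := by
  rw [Nat.card_prod, Nat.card_zmod, Module.natCard_eq_pow_finrank (K := ZMod p), Nat.card_zmod, hm, pow_succ]

theorem nongen_card {p : ℕ} {W : Type*} [Fact (Nat.Prime p)] (hp : p ≠ 2) [AddCommGroup W]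
    [Module (ZMod p) W] [Fintype W] [DecidableEq W] [HeisData p W]
    (halt : ∀ v : W, HeisData.ω (p := p) v v = 0)
    (hnd : ∀ v : W, (∀ w : W, HeisData.ω (p := p) v w = 0) → v = 0) [Nontrivial W] {r : ℕ}
    (hr : Module.finrank (ZMod p) W < r) :
    Nat.card ((genSet r (W × ZMod p))ᶜ : Set _) * p ≤ Nat.card (W × ZMod p) ^ r := by
  classical
  let D := {φ : W →ₗ[ZMod p] ZMod p // φ ≠ 0}
  have : Finite (W →ₗ[ZMod p] ZMod p) := Module.finite_of_finite (ZMod p)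
  have : Fintype D := Fintype.ofFinite _
  have hsub : (genSet r (W × ZMod p))ᶜ ⊆ ⋃ φ : D, {g | ∀ i, φ.1 (g i).1 = 0} := by
    intro g hg
    rw [Set.mem_compl_iff, mem_genSet_iff hp halt hnd] at hg
    obtain ⟨φ, hφ, hle⟩ := Submodule.exists_le_ker_of_lt_top _ (lt_top_iff_ne_top.2 hg)
    rw [Set.mem_iUnion]
    exact ⟨⟨φ, hφ⟩, fun i => hle (Submodule.subset_span ⟨i, rfl⟩)⟩
  have hcard : ∀ φ : D, Set.ncard {g : Fin r → W × ZMod p | ∀ i, φ.1 (g i).1 = 0} * p ^ r =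
      Nat.card (W × ZMod p) ^ r := by
    intro φ
    rw [← card_ker φ.1 φ.2, mul_pow]
    congr 1
    rw [← Nat.card_coe_set_eq]
    have e : {g : Fin r → W × ZMod p | ∀ i, φ.1 (g i).1 = 0} ≃
        (Fin r → {x : W × ZMod p // φ.1 x.1 = 0}) :=
      (Equiv.subtypeEquivRight (fun g => Iff.rfl)).trans
        (Equiv.subtypePiEquivPi (p := fun _ (x : W × ZMod p) => φ.1 x.1 = 0))
    rw [Nat.card_congr e]
    simp
  have hD : Nat.card D ≤ p ^ (Module.finrank (ZMod p) W) := by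
    calc Nat.card D ≤ Nat.card (W →ₗ[ZMod p] ZMod p) :=
          Nat.card_le_card_of_injective _ Subtype.val_injective
      _ = _ := by
          rw [Module.natCard_eq_pow_finrank (K := ZMod p), Nat.card_zmod]
          congr 1
          exact Subspace.dual_finrank_eq
  have h1 : Nat.card ((genSet r (W × ZMod p))ᶜ : Set _) ≤
      ∑ φ : D, Set.ncard {g : Fin r → W × ZMod p | ∀ i, φ.1 (g i).1 = 0} := by
    rw [Nat.card_coe_set_eq]
    refine (Set.ncard_le_ncard hsub).trans ?_
    exact Set.ncard_iUnion_le_of_fintype _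
  have hp0 : 0 < p := (Fact.out : p.Prime).pos
  have h2 : Nat.card ((genSet r (W × ZMod p))ᶜ : Set _) * p ^ r ≤
      p ^ (Module.finrank (ZMod p) W) * Nat.card (W × ZMod p) ^ r := by
    calc _ ≤ (∑ φ : D, Set.ncard {g : Fin r → W × ZMod p | ∀ i, φ.1 (g i).1 = 0}) * p ^ r :=
          Nat.mul_le_mul_right _ h1
      _ = ∑ φ : D, Nat.card (W × ZMod p) ^ r := by
          rw [Finset.sum_mul]; exact Finset.sum_congr rfl fun φ _ => hcard φ
      _ = Nat.card D * Nat.card (W × ZMod p) ^ r := by simp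
      _ ≤ _ := Nat.mul_le_mul_right _ hD
  obtain ⟨k, hk⟩ : ∃ k, r = Module.finrank (ZMod p) W + 1 + k := ⟨_, (Nat.add_sub_of_le hr).symm⟩
  have h3 : p ^ (Module.finrank (ZMod p) W) * p ≤ p ^ r := by
    rw [← pow_succ]; exact Nat.pow_le_pow_right hp0 hr
  have hpos : 0 < p ^ (Module.finrank (ZMod p) W) := pow_pos hp0 _
  refine Nat.le_of_mul_le_mul_left ?_ hpos
  calc _ = Nat.card ((genSet r (W × ZMod p))ᶜ : Set _) *
        (p ^ (Module.finrank (ZMod p) W) * p) := by ring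
    _ ≤ _ := (Nat.mul_le_mul_left _ h3).trans h2
theorem card_gen {p : ℕ} {W : Type*} [Fact (Nat.Prime p)] (hp : p ≠ 2) [AddCommGroup W]
    [Module (ZMod p) W] [Fintype W] [DecidableEq W] [HeisData p W]
    (halt : ∀ v : W, HeisData.ω (p := p) v v = 0)
    (hnd : ∀ v : W, (∀ w : W, HeisData.ω (p := p) v w = 0) → v = 0) [Nontrivial W] {r : ℕ}
    (hr : Module.finrank (ZMod p) W < r) :
    2 * (Nat.card (W × ZMod p) : ℝ) ^ r ≤ 3 * Nat.card (genSet r (W × ZMod p)) := by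
  have h1 := nongen_card hp halt hnd hr
  have hp3 : 3 ≤ p := by
    have := (Fact.out : p.Prime).two_le
    omega
  have h2 : Nat.card ((genSet r (W × ZMod p))ᶜ : Set _) * 3 ≤ Nat.card (W × ZMod p) ^ r :=
    (Nat.mul_le_mul_left _ hp3).trans h1
  have h3 := Set.ncard_add_ncard_compl (genSet r (W × ZMod p))
  rw [← Nat.card_coe_set_eq, ← Nat.card_coe_set_eq, Nat.card_fun, Nat.card_fin] at h3
  have : 2 * (Nat.card (W × ZMod p)) ^ r ≤ 3 * Nat.card (genSet r (W × ZMod p)) := by omega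
  exact_mod_cast this

theorem unifOn_sum_le {X : Type*} [Fintype X] (Ω : Set X) (B : Finset X) :
    ∑ x ∈ B, unifOn Ω x ≤ B.card * (Nat.card Ω : ℝ)⁻¹ := by
  rw [← nsmul_eq_mul]
  refine Finset.sum_le_card_nsmul _ _ _ fun x _ => ?_
  unfold unifOn
  split_ifs
  · exact le_rfl
  · positivity

theorem lb_count {X : Type*} [Fintype X] [DecidableEq X] {Ω : Set X} {Q : Matrix X X ℝ} {M : ℕ}
    (hM : ∀ z, (Finset.univ.filter (fun y => Q z y ≠ 0)).card ≤ M) (x : X) (hx : x ∈ Ω) (t : ℕ)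
    (h : tvDist ((Q ^ t) x) (unifOn Ω) ≤ 1 / 4) : (Nat.card Ω : ℝ) ≤ 2 * (M : ℝ) ^ t := by
  have h1 := tv_set _ _ (Finset.univ.filter (fun y => ¬ ((Q ^ t) x y ≠ 0))) h
  have h2 : ∑ y ∈ Finset.univ.filter (fun y => ¬ ((Q ^ t) x y ≠ 0)), (Q ^ t) x y = 0 :=
    Finset.sum_eq_zero fun y hy => by simpa using hy
  have h3 := Finset.sum_filter_add_sum_filter_not Finset.univ (fun y => (Q ^ t) x y ≠ 0) (unifOn Ω)
  rw [unifOn_sum Ω ⟨x, hx⟩] at h3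
  have h4 := unifOn_sum_le Ω (Finset.univ.filter (fun y => (Q ^ t) x y ≠ 0))
  have h5 : ((Finset.univ.filter (fun y => (Q ^ t) x y ≠ 0)).card : ℝ) ≤ (M : ℝ) ^ t := by
    exact_mod_cast supp_card hM x t
  have hcard : (0:ℝ) < Nat.card Ω := by
    have : Nonempty Ω := ⟨⟨x, hx⟩⟩
    exact_mod_cast Nat.card_pos
  have h6 : 1 / 2 ≤ (M : ℝ) ^ t * (Nat.card Ω : ℝ)⁻¹ := by
    have : ((Finset.univ.filter (fun y => (Q ^ t) x y ≠ 0)).card : ℝ) * (Nat.card Ω : ℝ)⁻¹ ≤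
      (M : ℝ) ^ t * (Nat.card Ω : ℝ)⁻¹ := by gcongr
    linarith
  rw [← div_eq_mul_inv, le_div_iff₀ hcard] at h6
  linarith

theorem few_id {r : ℕ} (hr : 2 ≤ r) {H : Type*} [Group H] [Fintype H] [DecidableEq H] :
    ((Finset.univ.filter (fun g : Fin r → H => ¬ ((r:ℝ) / 2 < nnId g))).card : ℝ) * Nat.card H ≤
      2 * (Nat.card H : ℝ) ^ r := by
  have hr0 : (0:ℝ) < r := by exact_mod_cast (by omega : 0 < r)
  have h1 : ∑ g : Fin r → H, ((r:ℝ) - nnId g) = r * (Nat.card H : ℝ) ^ (r - 1) := by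
    have : ∀ g : Fin r → H, (r:ℝ) - nnId g = ∑ i, if g i = 1 then (1:ℝ) else 0 := by
      intro g
      unfold nnId
      have : (r:ℝ) = ∑ i : Fin r, (1:ℝ) := by simp
      rw [this, ← Finset.sum_sub_distrib]
      exact Finset.sum_congr rfl fun i _ => by split_ifs <;> norm_num
    simp_rw [this]
    rw [Finset.sum_comm]
    have h2 : ∀ i : Fin r, ∑ g : Fin r → H, (if g i = 1 then (1:ℝ) else 0) =
        (Nat.card H : ℝ) ^ (r - 1) := by
      intro i
      rw [Finset.sum_boole]
      have := Fintype.card_filter_piFinset_const_eq_of_mem (Finset.univ : Finset H) i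
        (Finset.mem_univ 1)
      rw [Fintype.piFinset_univ] at this
      rw [this]
      simp [Nat.card_eq_fintype_card]
    simp_rw [h2]
    simp
  have hnn : ∀ g : Fin r → H, 0 ≤ (r:ℝ) - nnId g := by
    intro g
    have : nnId g ≤ ∑ i : Fin r, (1:ℝ) := Finset.sum_le_sum fun i _ => by split_ifs <;> norm_num
    simp at this
    linarith
  have h3 : ((Finset.univ.filter (fun g : Fin r → H => ¬ ((r:ℝ) / 2 < nnId g))).card : ℝ) * (r / 2)
      ≤ ∑ g : Fin r → H, ((r:ℝ) - nnId g) := by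
    rw [← nsmul_eq_mul]
    refine (Finset.card_nsmul_le_sum _ (fun g => (r:ℝ) - nnId g) _ fun g hg => ?_).trans
      (Finset.sum_le_sum_of_subset_of_nonneg (Finset.subset_univ _) fun g _ _ => hnn g)
    simp only [Finset.mem_filter, Finset.mem_univ, true_and, not_lt] at hg
    linarith
  rw [h1] at h3
  have h4 : ((Finset.univ.filter (fun g : Fin r → H => ¬ ((r:ℝ) / 2 < nnId g))).card : ℝ)
      ≤ 2 * (Nat.card H : ℝ) ^ (r - 1) := by
    refine le_of_mul_le_mul_right ?_ (show (0:ℝ) < r / 2 by positivity)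
    linarith
  calc _ ≤ 2 * (Nat.card H : ℝ) ^ (r - 1) * Nat.card H := by gcongr
    _ = 2 * (Nat.card H : ℝ) ^ (r - 1 + 1) := by ring
    _ = _ := by rw [Nat.sub_add_cancel (by omega)]

theorem lb_first (p : ℕ) [Fact (Nat.Prime p)] (r : ℕ) (hr : 2 ≤ r) (H : Type*) [Group H]
    [Fintype H] [DecidableEq H] (ht : ∀ x : H, x ^ p = 1) (hH : 27 ≤ Nat.card H)
    (hg : 2 * (Nat.card H : ℝ) ^ r ≤ 3 * Nat.card (genSet r H))
    (x : Fin r → H) (hx : x ∈ genSet r H) (t : ℕ)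
    (h : tvDist ((paQ p r H ^ t) x) (unifOn (genSet r H)) ≤ 1 / 4) :
    (r : ℝ) / 6 ≤ (1 + 1 / (2 * r)) ^ t * nnId x := by
  have hr0 : (0:ℝ) < r := by exact_mod_cast (by omega : 0 < r)
  have hQ := paQ_good p r hr H ht
  have h1 := tv_set _ _ (Finset.univ.filter (fun g : Fin r → H => (r:ℝ) / 2 < nnId g)) h
  have h3 := Finset.sum_filter_add_sum_filter_not Finset.univ
    (fun g : Fin r → H => (r:ℝ) / 2 < nnId g) (unifOn (genSet r H))
  rw [unifOn_sum _ ⟨x, hx⟩] at h3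
  have h4 := unifOn_sum_le (genSet r H)
    (Finset.univ.filter (fun g : Fin r → H => ¬ ((r:ℝ) / 2 < nnId g)))
  have h5 := few_id hr (H := H)
  have hcard : (0:ℝ) < Nat.card (genSet r H) := by
    have : Nonempty (genSet r H) := ⟨⟨x, hx⟩⟩
    exact_mod_cast Nat.card_pos
  set B : ℝ := ((Finset.univ.filter (fun g : Fin r → H => ¬ ((r:ℝ) / 2 < nnId g))).card : ℝ)
  have hB0 : 0 ≤ B := Nat.cast_nonneg _
  have hH' : (27:ℝ) ≤ Nat.card H := by exact_mod_cast hH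
  have h6 : B * (Nat.card (genSet r H) : ℝ)⁻¹ ≤ 1 / 9 := by
    rw [← div_eq_mul_inv, div_le_iff₀ hcard]
    have : B * 27 ≤ B * Nat.card H := by gcongr
    linarith
  have h7 := super_eig (f := nnId) hQ.1 (by positivity : (0:ℝ) ≤ 1 + 1 / (2 * r))
    (paQ_nnId p r hr H) x t
  have h8 : (∑ y ∈ Finset.univ.filter (fun g : Fin r → H => (r:ℝ) / 2 < nnId g),
      (paQ p r H ^ t) x y) * (r / 2) ≤ ∑ y, (paQ p r H ^ t) x y * nnId y := by
    rw [Finset.sum_mul]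
    calc _ ≤ ∑ y ∈ Finset.univ.filter (fun g : Fin r → H => (r:ℝ) / 2 < nnId g),
        (paQ p r H ^ t) x y * nnId y := by
          refine Finset.sum_le_sum fun y hy => ?_
          simp only [Finset.mem_filter, Finset.mem_univ, true_and] at hy
          exact mul_le_mul_of_nonneg_left hy.le ((hQ.pow t).1 _ _)
      _ ≤ _ := Finset.sum_le_sum_of_subset_of_nonneg (Finset.subset_univ _) fun y _ _ =>
          mul_nonneg ((hQ.pow t).1 _ _) (nnId_nonneg y)
  have h9 : (1:ℝ) / 3 ≤ ∑ y ∈ Finset.univ.filter (fun g : Fin r → H => (r:ℝ) / 2 < nnId g),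
      (paQ p r H ^ t) x y := by linarith
  have h10 := mul_le_mul_of_nonneg_right h9 (show (0:ℝ) ≤ r / 2 by positivity)
  linarith

theorem exists_start {p : ℕ} {W : Type*} [Fact (Nat.Prime p)] (hp : p ≠ 2) [AddCommGroup W]
    [Module (ZMod p) W] [Fintype W] [DecidableEq W] [HeisData p W]
    (halt : ∀ v : W, HeisData.ω (p := p) v v = 0)
    (hnd : ∀ v : W, (∀ w : W, HeisData.ω (p := p) v w = 0) → v = 0) [Nontrivial W] {r n : ℕ}
    (hn : Module.finrank (ZMod p) W = n) (hr : n < r) :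
    ∃ x ∈ genSet r (W × ZMod p), nnId x ≤ n := by
  let b := Module.finBasisOfFinrankEq (ZMod p) W hn
  let x : Fin r → W × ZMod p := fun i => if h : i.val < n then (b ⟨i, h⟩, 0) else 1
  refine ⟨x, ?_, ?_⟩
  · rw [mem_genSet_iff hp halt hnd, eq_top_iff, ← b.span_eq, Submodule.span_le]
    rintro _ ⟨k, rfl⟩
    apply Submodule.subset_span
    exact ⟨⟨k, k.2.trans hr⟩, by simp [x]⟩
  · unfold nnId
    calc _ ≤ ∑ i : Fin r, if i.val < n then (1:ℝ) else 0 := by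
          refine Finset.sum_le_sum fun i _ => ?_
          by_cases h : i.val < n
          · rw [if_pos h]; split_ifs <;> norm_num
          · simp [x, h]
      _ ≤ n := by
          rw [Finset.sum_boole]
          have : (Finset.univ.filter (fun i : Fin r => i.val < n)).card ≤ (Finset.range n).card :=
            Finset.card_le_card_of_injOn (fun i => i.val) (fun i hi => by simpa using hi)
              (fun i _ j _ h => Fin.ext h)
          rw [Finset.card_range] at this
          exact_mod_cast this

theorem sqrt_log (r : ℝ) (hr : 3 ≤ r) : Real.log r * (1 + Real.log r) ≤ 32 * Real.sqrt r := by
  have h0 : 0 < r := by linarith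
  have h1 : 1 ≤ Real.log r := by
    rw [Real.le_log_iff_exp_le h0]
    linarith [Real.exp_one_lt_d9]
  have h2 := Real.log_le_rpow_div h0.le (show (0:ℝ) < 1/4 by norm_num)
  have h3 : r ^ (1/4 : ℝ) * r ^ (1/4 : ℝ) = Real.sqrt r := by
    rw [← Real.rpow_add h0, Real.sqrt_eq_rpow]; norm_num
  have h4 : 0 ≤ r ^ (1/4 : ℝ) := by positivity
  have h5 : Real.log r ≤ 4 * r ^ (1/4 : ℝ) := by linarith
  nlinarith [mul_le_mul h5 h5 (by linarith) (by linarith)]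

theorem final_arith (p : ℕ) (hp : 3 ≤ p) (m r t : ℕ) (hm : 1 ≤ m) (hr : 2 * m + 1 ≤ r)
    (hr0 : 1296 ≤ r)
    (h1 : ((p : ℝ) ^ (2 * m + 1)) ^ r ≤ 3 * (((2 * p * r ^ 2 + 1 : ℕ) : ℝ)) ^ t)
    (h2 : (r : ℝ) / 6 ≤ (1 + 1 / (2 * r)) ^ t * (2 * m : ℕ)) :
    min (Real.log p / (2 * (Real.log (3 * p) + 2)) / 32) (1 / 2) *
      max ((r : ℝ) * Real.log r) ((r : ℝ) * ((2 * m : ℝ) + 1) / Real.log (Real.exp 1 * r)) ≤ t := by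
  have hp' : (3:ℝ) ≤ p := by exact_mod_cast hp
  have hr' : (1296:ℝ) ≤ r := by exact_mod_cast hr0
  have hrpos : (0:ℝ) < r := by linarith
  have hm' : (1:ℝ) ≤ m := by exact_mod_cast hm
  have hlp : 1 ≤ Real.log p := by
    rw [Real.le_log_iff_exp_le (by linarith)]
    linarith [Real.exp_one_lt_d9]
  have hlr : 1 ≤ Real.log r := by
    rw [Real.le_log_iff_exp_le (by linarith)]
    linarith [Real.exp_one_lt_d9]
  have hl3p : 0 ≤ Real.log (3 * p) := Real.log_nonneg (by linarith)
  have hler : Real.log (Real.exp 1 * r) = 1 + Real.log r := by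
    rw [Real.log_mul (Real.exp_pos 1).ne' hrpos.ne', Real.log_exp]
  rw [hler]
  set c₂ := Real.log p / (2 * (Real.log (3 * p) + 2)) with hc₂
  have hc₂pos : 0 < c₂ := by positivity
  have ht0 : (0:ℝ) ≤ t := Nat.cast_nonneg _
  -- counting bound
  have A : c₂ * ((r : ℝ) * ((2 * m : ℝ) + 1) / (1 + Real.log r)) ≤ t := by
    have hM : (1:ℝ) ≤ ((2 * p * r ^ 2 + 1 : ℕ) : ℝ) := by
      push_cast; nlinarith [mul_pos (by linarith : (0:ℝ) < p) (pow_pos hrpos 2)]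
    have e := Real.log_le_log (by positivity) h1
    rw [Real.log_mul (by norm_num) (by positivity), Real.log_pow, Real.log_pow, Real.log_pow] at e
    have hMle : Real.log ((2 * p * r ^ 2 + 1 : ℕ) : ℝ) ≤ (Real.log (3 * p) + 2) * (1 + Real.log r) := by
      calc _ ≤ Real.log (3 * p * r ^ 2) := by
            apply Real.log_le_log (by linarith)
            push_cast; nlinarith [mul_le_mul hp' (pow_le_pow_left₀ (by norm_num) hr' 2) (by norm_num) (by linarith)]
        _ = Real.log (3 * p) + 2 * Real.log r := by
            rw [Real.log_mul (by positivity) (by positivity), Real.log_pow]; norm_num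
        _ ≤ _ := by nlinarith
    have hl3 : Real.log 3 ≤ Real.log p := Real.log_le_log (by norm_num) hp'
    have e2 : t * Real.log ((2 * p * r ^ 2 + 1 : ℕ) : ℝ) ≤
        t * ((Real.log (3 * p) + 2) * (1 + Real.log r)) := mul_le_mul_of_nonneg_left hMle ht0
    push_cast at e e2
    have e3 : (r:ℝ) * ((2 * m + 1) * Real.log p) ≤
        Real.log p + t * ((Real.log (3 * p) + 2) * (1 + Real.log r)) := by linarith
    have e4 : Real.log p * 2 ≤ (r:ℝ) * ((2 * m + 1) * Real.log p) := by
      have : 2 ≤ (r:ℝ) * (2 * m + 1) := by nlinarith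
      nlinarith
    rw [hc₂, div_mul_div_comm, div_le_iff₀ (by positivity)]
    nlinarith
  have hcmin1 : min (c₂ / 32) (1/2) ≤ c₂ / 32 := min_le_left _ _
  have hcmin2 : min (c₂ / 32) (1/2) ≤ 1/2 := min_le_right _ _
  have hcmin0 : 0 ≤ min (c₂ / 32) (1/2) := le_min (by positivity) (by norm_num)
  rw [mul_max_of_nonneg _ _ hcmin0, max_le_iff]
  constructor
  · by_cases hs : Real.sqrt r ≤ 2 * m + 1
    · have := sqrt_log r (by linarith)
      calc min (c₂ / 32) (1/2) * (r * Real.log r) ≤ c₂ / 32 * (r * Real.log r) := by gcongr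
        _ ≤ c₂ * ((r : ℝ) * ((2 * m : ℝ) + 1) / (1 + Real.log r)) := by
          rw [div_mul_eq_mul_div, mul_div_assoc]
          refine mul_le_mul_of_nonneg_left ?_ hc₂pos.le
          rw [div_le_div_iff₀ (by norm_num) (by linarith)]
          nlinarith
        _ ≤ t := A
    · push Not at hs
      have hsq : Real.sqrt r * Real.sqrt r = r := Real.mul_self_sqrt hrpos.le
      have hspos : 0 < Real.sqrt r := Real.sqrt_pos.2 hrpos
      have hexp : (1 + 1 / (2 * (r:ℝ))) ^ t ≤ Real.exp (t * (1 / (2 * r))) := by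
        rw [Real.exp_nat_mul]
        refine pow_le_pow_left₀ (by positivity) ?_ t
        linarith [Real.add_one_le_exp (1 / (2 * (r:ℝ)))]
      have e1 : (r:ℝ) / 6 ≤ Real.exp (t * (1 / (2 * r))) * Real.sqrt r := by
        refine h2.trans (mul_le_mul hexp ?_ (by positivity) (by positivity))
        push_cast; linarith
      have e2 : Real.sqrt r / 6 ≤ Real.exp (t * (1 / (2 * r))) := by
        refine le_of_mul_le_mul_right ?_ hspos
        linarith [show Real.sqrt r / 6 * Real.sqrt r = r / 6 by rw [div_mul_eq_mul_div, hsq]]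
      have e3 := Real.log_le_log (by positivity) e2
      rw [Real.log_exp, Real.log_div hspos.ne' (by norm_num), Real.log_sqrt hrpos.le] at e3
      have e4 : 4 * Real.log 6 ≤ Real.log r := by
        have := Real.log_le_log (by norm_num) hr'
        rw [show (1296:ℝ) = 6 ^ 4 by norm_num, Real.log_pow] at this
        push_cast at this; linarith
      have e5 : Real.log r / 4 ≤ t * (1 / (2 * r)) := by linarith
      rw [mul_one_div, le_div_iff₀ (by positivity)] at e5
      calc min (c₂ / 32) (1/2) * (r * Real.log r) ≤ 1/2 * (r * Real.log r) := by gcongr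
        _ ≤ t := by linarith
  · refine le_trans ?_ A
    refine mul_le_mul_of_nonneg_right (by linarith) (by positivity)

theorem stmt19 :
    ∀ (p : ℕ) [Fact (Nat.Prime p)], p ≠ 2 →
      ∃ c : ℝ, 0 < c ∧ ∃ r₀ : ℕ,
        ∀ (m : ℕ), 1 ≤ m → ∀ r : ℕ, 2 * m + 1 ≤ r → r₀ ≤ r →
          ∀ (W : Type) [AddCommGroup W] [Module (ZMod p) W] [Fintype W]
            [DecidableEq W] [HeisData p W],
            Module.finrank (ZMod p) W = 2 * m →
            (∀ v : W, HeisData.ω (p := p) v v = 0) →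
            (∀ v : W, (∀ w : W, HeisData.ω (p := p) v w = 0) → v = 0) →
            c * max ((r : ℝ) * Real.log r)
                ((r : ℝ) * ((2 * m : ℝ) + 1) / Real.log (Real.exp 1 * r)) ≤
              (mixTime (paQ p r (W × ZMod p)) (unifOn (genSet r (W × ZMod p)))
                (genSet r (W × ZMod p)) : ℝ) := by
  intro p _ hp
  have hp3 : 3 ≤ p := by
    have := (Fact.out : p.Prime).two_le
    omega
  have hlp : 0 < Real.log p := Real.log_pos (by exact_mod_cast (by omega : 1 < p))
  have hl3p : 0 < Real.log (3 * p) :=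
    Real.log_pos (by have : (3:ℝ) ≤ p := by exact_mod_cast hp3
                     linarith)
  refine ⟨min (Real.log p / (2 * (Real.log (3 * p) + 2)) / 32) (1 / 2),
    lt_min (by positivity) (by norm_num), 1296, ?_⟩
  intro m hm r hr hr0 W _ _ _ _ _ hfin halt hnd
  have hnt : Nontrivial W := Module.nontrivial_of_finrank_pos (R := ZMod p) (by omega)
  have hr2 : 2 ≤ r := by omega
  have hlt : Module.finrank (ZMod p) W < r := by omega
  have htor : ∀ x : W × ZMod p, x ^ p = 1 := heis_torsion halt
  obtain ⟨x, hx, hxn⟩ := exists_start hp halt hnd hfin (r := r) (by omega)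
  have hgood := paQ_good p r hr2 (W × ZMod p) htor
  have hex := exists_mix hgood ⟨x, hx⟩ (fun g => by
      have happ : paQ p r (W × ZMod p) g g =
        2⁻¹ * ((1 : Matrix (Fin r → W × ZMod p) (Fin r → W × ZMod p) ℝ) g g +
        paP p r (W × ZMod p) g g) := rfl
      rw [happ, Matrix.one_apply_eq]
      have := paP_nonneg p r hr2 (W × ZMod p) g g
      positivity)
    (fun g hg g' hg' => irred hp halt hnd hr2 hlt g g' hg hg')
  have hmem := Nat.sInf_mem (s := {t : ℕ | ∀ x ∈ genSet r (W × ZMod p),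
    tvDist ((paQ p r (W × ZMod p) ^ t) x) (unifOn (genSet r (W × ZMod p))) ≤ 1 / 4}) hex
  have ht : tvDist ((paQ p r (W × ZMod p) ^ (mixTime (paQ p r (W × ZMod p))
      (unifOn (genSet r (W × ZMod p))) (genSet r (W × ZMod p)))) x)
      (unifOn (genSet r (W × ZMod p))) ≤ 1 / 4 := hmem x hx
  generalize mixTime (paQ p r (W × ZMod p))
      (unifOn (genSet r (W × ZMod p))) (genSet r (W × ZMod p)) = t at ht ⊢
  have hcard := card_heis (p := p) (W := W) m hfin
  have hgen := card_gen hp halt hnd hlt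
  have h1 := lb_count (paQ_supp p r (W × ZMod p)) x hx _ ht
  have h27 : 27 ≤ Nat.card (W × ZMod p) := by
    rw [hcard]
    calc 27 = 3 ^ 3 := by norm_num
      _ ≤ p ^ 3 := Nat.pow_le_pow_left hp3 3
      _ ≤ _ := Nat.pow_le_pow_right (by omega) (by omega)
  have h2 := lb_first p r hr2 (W × ZMod p) htor h27 hgen x hx _ ht
  rw [hcard] at hgen
  push_cast at hgen
  refine final_arith p hp3 m r _ hm hr hr0 ?_ (h2.trans (mul_le_mul_of_nonneg_left hxn (by positivity)))
  linarith
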